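/- Let X₁, X₂ be Polish metric spaces, C : X₁ × 𝒫(X₂) → (−∞,+∞] lower semi-continuous, bounded from below, with C(x₁,·) convex for every x₁, and F₁, F₂ superlinear admissible entropy functions. Then the functional ET : ℳ_s(X₁)×ℳ_s(X₂) → (−∞,+∞] is convex and positively one-homogeneous, i.e. ET(λμ₁, λμ₂) = λ ET(μ₁,μ₂) for every λ ≥ 0, μ₁ ∈ ℳ_s(X₁), μ₂ ∈ ℳ_s(X₂). -/

import Mathlib

open MeasureTheory Filter Set Topology
open scoped ENNReal NNReal BoundedContinuousFunction

noncomputable section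

/-- The "positive part" of an extended real number, as an element of `ℝ≥0∞`. -/
def posE (a : EReal) : ℝ≥0∞ := if a = ⊤ then ⊤ else ENNReal.ofReal a.toReal

/-- Integral of an `EReal`-valued function: positive part minus negative part
(in `EReal`, so that it is always defined). -/
def eIntegral {α : Type*} [MeasurableSpace α] (μ : Measure α) (f : α → EReal) : EReal :=
  ((∫⁻ x, posE (f x) ∂μ : ℝ≥0∞) : EReal) - ((∫⁻ x, posE (-(f x)) ∂μ : ℝ≥0∞) : EReal)

/-- The recession constant `lim_{s→∞} G(s)/s` (as a `limsup`, which coincides with the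
limit for convex functions). -/
def recessionOf (G : ℝ → ℝ≥0∞) : ℝ≥0∞ :=
  Filter.limsup (fun s : ℝ => G s / ENNReal.ofReal s) Filter.atTop

/-- An admissible entropy function: a convex, lower semicontinuous function
`F : [0,∞) → [0,∞]` which is finite at some positive point. -/
structure EntropyFn where
  F : ℝ → ℝ≥0∞
  convex' : ∀ a ∈ Ici (0:ℝ), ∀ b ∈ Ici (0:ℝ), ∀ t : ℝ, 0 ≤ t → t ≤ 1 →
    F (t * a + (1 - t) * b) ≤ ENNReal.ofReal t * F a + ENNReal.ofReal (1 - t) * F b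
  lsc : LowerSemicontinuousOn F (Ici (0:ℝ))
  dom : ∃ s : ℝ, 0 < s ∧ F s ≠ ∞

namespace EntropyFn

/-- The recession constant `F'_∞ = lim_{s→∞} F(s)/s`. -/
def recC (F : EntropyFn) : ℝ≥0∞ := recessionOf F.F

/-- `F` is superlinear if `F'_∞ = ∞`. -/
def Superlinear (F : EntropyFn) : Prop := F.recC = ∞

/-- `F°(φ) := inf_{s ≥ 0} (φ·s + F(s))`, extended to `EReal` arguments. -/
def circ (F : EntropyFn) (φ : EReal) : EReal :=
  ⨅ s : Ici (0:ℝ), φ * ((s : ℝ) : EReal) + ((F.F (s : ℝ) : ℝ≥0∞) : EReal)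

/-- The (interior of the) domain of `F°` is taken inside the set where `F°` is not `-∞`. -/
def circDom (F : EntropyFn) : Set ℝ := {φ : ℝ | F.circ (φ : EReal) ≠ ⊥}

/-- The reverse entropy function `R(r) = r·F(1/r)` for `r > 0`, with `R(0) = F'_∞`. -/
def revF (F : EntropyFn) (r : ℝ) : ℝ≥0∞ :=
  if 0 < r then ENNReal.ofReal r * F.F (1 / r) else F.recC

/-- The Legendre conjugate `R*(ψ) = sup_{s ≥ 0} (s·ψ − R(s))` of the reverse function. -/
def revConj (F : EntropyFn) (ψ : ℝ) : EReal :=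
  ⨆ s : Ici (0:ℝ), (((s : ℝ) * ψ : ℝ) : EReal) - ((F.revF (s : ℝ) : ℝ≥0∞) : EReal)

end EntropyFn

/-- The entropy functional `ℱ(γ|μ) = ∫ F(dγ/dμ) dμ + F'_∞ · γ^⊥(X)`, where
`γ = (dγ/dμ)·μ + γ^⊥` is the Lebesgue decomposition of `γ` with respect to `μ`. -/
def entF {X : Type*} [MeasurableSpace X] (F : EntropyFn) (γ μ : Measure X) : ℝ≥0∞ :=
  (∫⁻ x, F.F ((γ.rnDeriv μ x).toReal) ∂μ) + F.recC * (γ.singularPart μ) Set.univ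

/-- The reverse entropy functional `ℛ(μ|γ) = ∫ R(dμ/dγ) dγ + R'_∞ · μ^⊥(X)`. -/
def revEntF {X : Type*} [MeasurableSpace X] (F : EntropyFn) (μ γ : Measure X) : ℝ≥0∞ :=
  (∫⁻ x, F.revF ((μ.rnDeriv γ x).toReal) ∂γ) + recessionOf F.revF * (μ.singularPart γ) Set.univ

section WOET

variable {X₁ X₂ : Type*} [MeasurableSpace X₁] [MeasurableSpace X₂]

/-- The weak entropy-transport cost
`ℰ_C(γ|μ₁,μ₂) = ℱ₁(γ₁|μ₁) + ℱ₂(γ₂|μ₂) + ∫ C(x₁, γ_{x₁}) dγ₁(x₁)`. -/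
def wCost [StandardBorelSpace X₂] [Nonempty X₂]
    (C : X₁ → ProbabilityMeasure X₂ → EReal) (F₁ F₂ : EntropyFn)
    (μ₁ : Measure X₁) (μ₂ : Measure X₂)
    (γ : Measure (X₁ × X₂)) (hγ : IsFiniteMeasure γ) : EReal :=
  haveI := hγ
  ((entF F₁ γ.fst μ₁ : ℝ≥0∞) : EReal) + ((entF F₂ γ.snd μ₂ : ℝ≥0∞) : EReal) +
    eIntegral γ.fst (fun x₁ => C x₁ ⟨γ.condKernel x₁, inferInstance⟩)

/-- The weak optimal entropy-transport value `ℰ_C(μ₁,μ₂)`. -/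
def wOpt [StandardBorelSpace X₂] [Nonempty X₂]
    (C : X₁ → ProbabilityMeasure X₂ → EReal) (F₁ F₂ : EntropyFn)
    (μ₁ : Measure X₁) (μ₂ : Measure X₂) : EReal :=
  sInf { e : EReal | ∃ (γ : Measure (X₁ × X₂)) (hγ : IsFiniteMeasure γ),
    e = wCost C F₁ F₂ μ₁ μ₂ γ hγ }

variable [TopologicalSpace X₁] [TopologicalSpace X₂]

/-- The dual feasible set `Λ`. -/
def lamSet (C : X₁ → ProbabilityMeasure X₂ → EReal) (F₁ F₂ : EntropyFn) :
    Set ((X₁ →ᵇ ℝ) × (X₂ →ᵇ ℝ)) :=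
  { φ | (∀ x, φ.1 x ∈ interior F₁.circDom) ∧ (∀ x, φ.2 x ∈ interior F₂.circDom) ∧
      ∀ (x₁ : X₁) (p : ProbabilityMeasure X₂),
        ((φ.1 x₁ + ∫ x₂, φ.2 x₂ ∂(p : Measure X₂) : ℝ) : EReal) ≤ C x₁ p }

/-- The dual feasible set `Λ_R`. -/
def lamRSet (C : X₁ → ProbabilityMeasure X₂ → EReal) (F₁ F₂ : EntropyFn) :
    Set ((X₁ →ᵇ ℝ) × (X₂ →ᵇ ℝ)) :=
  { φ | (∃ b : ℝ, ((b : ℝ) : EReal) < ((F₁.F 0 : ℝ≥0∞) : EReal) ∧ ∀ x, φ.1 x ≤ b) ∧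
        (∃ b : ℝ, ((b : ℝ) : EReal) < ((F₂.F 0 : ℝ≥0∞) : EReal) ∧ ∀ x, φ.2 x ≤ b) ∧
        ∀ (x₁ : X₁) (p : ProbabilityMeasure X₂),
          F₁.revConj (φ.1 x₁) + eIntegral (p : Measure X₂) (fun x₂ => F₂.revConj (φ.2 x₂))
            ≤ C x₁ p }

/-- The dual feasible set `Λ_ET` (constraints tested against all pairs of nonnegative finite
measures; on all other signed measures `ET = +∞`, so those constraints are vacuous). -/
def lamETSet [StandardBorelSpace X₂] [Nonempty X₂]
    (C : X₁ → ProbabilityMeasure X₂ → EReal) (F₁ F₂ : EntropyFn) :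
    Set ((X₁ →ᵇ ℝ) × (X₂ →ᵇ ℝ)) :=
  { φ | ∀ (μ₁ : Measure X₁) (μ₂ : Measure X₂), IsFiniteMeasure μ₁ → IsFiniteMeasure μ₂ →
      (((∫ x, φ.1 x ∂μ₁) + ∫ x, φ.2 x ∂μ₂ : ℝ) : EReal) ≤ wOpt C F₁ F₂ μ₁ μ₂ }

/-- The set `Λ_ET^<`. -/
def lamETltSet [StandardBorelSpace X₂] [Nonempty X₂]
    (C : X₁ → ProbabilityMeasure X₂ → EReal) (F₁ F₂ : EntropyFn) :
    Set ((X₁ →ᵇ ℝ) × (X₂ →ᵇ ℝ)) :=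
  { φ ∈ lamETSet C F₁ F₂ |
      (∃ b : ℝ, ((b : ℝ) : EReal) < ((F₁.F 0 : ℝ≥0∞) : EReal) ∧ ∀ x, φ.1 x ≤ b) ∧
      (∃ b : ℝ, ((b : ℝ) : EReal) < ((F₂.F 0 : ℝ≥0∞) : EReal) ∧ ∀ x, φ.2 x ≤ b) }

/-- `R_C φ(x₁) := inf_{p ∈ 𝒫(X₂)} (C(x₁,p) + ∫ φ dp)`. -/
def RCfun (C : X₁ → ProbabilityMeasure X₂ → EReal) (φ : X₂ →ᵇ ℝ) (x₁ : X₁) : EReal :=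
  ⨅ p : ProbabilityMeasure X₂, C x₁ p + ((∫ x₂, φ x₂ ∂(p : Measure X₂) : ℝ) : EReal)

/-- Property (BM) of an admissible entropy function on a space `X`. -/
def HasBM (X : Type*) [TopologicalSpace X] [MeasurableSpace X] (F : EntropyFn) : Prop :=
  ∀ ψ : X →ᵇ ℝ, (∃ b : ℝ, ((b : ℝ) : EReal) < ((F.F 0 : ℝ≥0∞) : EReal) ∧ ∀ x, ψ x ≤ b) →
    ∃ s : X → ℝ, Measurable s ∧ (∃ M : ℝ, ∀ x, |s x| ≤ M) ∧ (∀ x, 0 < s x) ∧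
      ∀ x, ((F.revF (s x) : ℝ≥0∞) : EReal) + F.revConj (ψ x) = ((s x * ψ x : ℝ) : EReal)

end WOET

/-- The functional `ET` extended to pairs of finite signed measures:
it equals `ℰ_C(μ₁,μ₂)` when both arguments are (induced by) nonnegative finite measures,
and `+∞` otherwise. -/
def ETsgn {X₁ X₂ : Type*} [MeasurableSpace X₁] [MeasurableSpace X₂]
    [StandardBorelSpace X₂] [Nonempty X₂]
    (C : X₁ → ProbabilityMeasure X₂ → EReal) (F₁ F₂ : EntropyFn)
    (ν₁ : SignedMeasure X₁) (ν₂ : SignedMeasure X₂) : EReal :=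
  sInf { e : EReal | ∃ (μ₁ : Measure X₁) (h₁ : IsFiniteMeasure μ₁)
      (μ₂ : Measure X₂) (h₂ : IsFiniteMeasure μ₂),
      ν₁ = @Measure.toSignedMeasure X₁ _ μ₁ h₁ ∧ ν₂ = @Measure.toSignedMeasure X₂ _ μ₂ h₂ ∧
      e = wOpt C F₁ F₂ μ₁ μ₂ }

section Martingale

variable {X : Set ℝ}

/-- The martingale condition for a finite measure on `X × X`:
`∫ y dγ_x(y) = x` for `γ₁`-a.e. `x`. -/
def martCond [StandardBorelSpace ↥X] [Nonempty ↥X]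
    (γ : Measure (↥X × ↥X)) (hγ : IsFiniteMeasure γ) : Prop :=
  haveI := hγ
  ∀ᵐ x ∂γ.fst, (∫ y, (y : ℝ) ∂(γ.condKernel x)) = (x : ℝ)

/-- The martingale optimal entropy transport value `ℰ_M(μ₁,μ₂)` (with an `EReal`-valued
cost `c`). -/
def eMart [StandardBorelSpace ↥X] [Nonempty ↥X]
    (c : ↥X → ↥X → EReal) (F₁ F₂ : EntropyFn) (μ₁ μ₂ : Measure ↥X) : EReal :=
  sInf { e : EReal | ∃ (γ : Measure (↥X × ↥X)) (hγ : IsFiniteMeasure γ), martCond γ hγ ∧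
    e = ((entF F₁ γ.fst μ₁ : ℝ≥0∞) : EReal) + ((entF F₂ γ.snd μ₂ : ℝ≥0∞) : EReal) +
        eIntegral γ (fun q => c q.1 q.2) }

/-- The martingale optimal entropy transport value `ℰ_M(μ₁,μ₂)` (with a `[0,∞]`-valued
cost `c`). -/
def eMartNN [StandardBorelSpace ↥X] [Nonempty ↥X]
    (c : ↥X → ↥X → ℝ≥0∞) (F₁ F₂ : EntropyFn) (μ₁ μ₂ : Measure ↥X) : EReal :=
  sInf { e : EReal | ∃ (γ : Measure (↥X × ↥X)) (hγ : IsFiniteMeasure γ), martCond γ hγ ∧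
    e = ((entF F₁ γ.fst μ₁ + entF F₂ γ.snd μ₂ + ∫⁻ q, c q.1 q.2 ∂γ : ℝ≥0∞) : EReal) }

/-- The dual feasible set `Λ_M` for the martingale problem. -/
def lamM (c : ↥X → ↥X → EReal) (F₁ F₂ : EntropyFn) : Set ((↥X →ᵇ ℝ) × (↥X →ᵇ ℝ)) :=
  { φ | (∀ x, φ.1 x ∈ interior F₁.circDom) ∧ (∀ x, φ.2 x ∈ interior F₂.circDom) ∧
      ∃ h : ↥X →ᵇ ℝ, ∀ x₁ x₂ : ↥X,
        ((φ.1 x₁ + φ.2 x₂ + h x₁ * ((x₂ : ℝ) - (x₁ : ℝ)) : ℝ) : EReal) ≤ c x₁ x₂ }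

/-- The perspective function `r·F(θ/r)` with the convention `r·F(θ/r) = θ·F'_∞` for `r = 0`. -/
def perspFn (F : EntropyFn) (r θ : ℝ) : ℝ≥0∞ :=
  if r = 0 then ENNReal.ofReal θ * F.recC else ENNReal.ofReal r * F.F (θ / r)

/-- The homogeneous marginal perspective cost `H(x₁,r₁;x₂,r₂)` (the dependence on
`(x₁,x₂)` is through the value `c = c(x₁,x₂)`). -/
def Hcost (F₁ F₂ : EntropyFn) (c : ℝ≥0∞) (r₁ r₂ : ℝ) : ℝ≥0∞ :=
  if c ≠ ∞ then
    ⨅ θ : Ioi (0:ℝ), perspFn F₁ r₁ (θ : ℝ) + perspFn F₂ r₂ (θ : ℝ) + ENNReal.ofReal (θ : ℝ) * c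
  else F₁.F 0 * ENNReal.ofReal r₁ + F₂.F 0 * ENNReal.ofReal r₂

/-- The functional `ℋ(μ₁,μ₂|γ)`. -/
def hMargFun (F₁ F₂ : EntropyFn) (c : ↥X → ↥X → ℝ≥0∞) (μ₁ μ₂ : Measure ↥X)
    (γ : Measure (↥X × ↥X)) : ℝ≥0∞ :=
  (∫⁻ q, Hcost F₁ F₂ (c q.1 q.2) ((μ₁.rnDeriv γ.fst q.1).toReal)
      ((μ₂.rnDeriv γ.snd q.2).toReal) ∂γ)
    + F₁.F 0 * (μ₁.singularPart γ.fst) Set.univ + F₂.F 0 * (μ₂.singularPart γ.snd) Set.univ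

/-- The functional `ℛ(μ₁,μ₂|γ)`. -/
def rMargFun (F₁ F₂ : EntropyFn) (c : ↥X → ↥X → ℝ≥0∞) (μ₁ μ₂ : Measure ↥X)
    (γ : Measure (↥X × ↥X)) : ℝ≥0∞ :=
  revEntF F₁ μ₁ γ.fst + revEntF F₂ μ₂ γ.snd + ∫⁻ q, c q.1 q.2 ∂γ

/-- The first `p`-homogeneous marginal of a measure on `Y × Y`, `Y = X × [0,∞)`. -/
def hMarg1 (p : ℝ) (α : Measure ((↥X × ℝ≥0) × (↥X × ℝ≥0))) : Measure ↥X :=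
  Measure.map (fun q => q.1.1) (α.withDensity fun q => (q.1.2 : ℝ≥0∞) ^ p)

/-- The second `p`-homogeneous marginal of a measure on `Y × Y`, `Y = X × [0,∞)`. -/
def hMarg2 (p : ℝ) (α : Measure ((↥X × ℝ≥0) × (↥X × ℝ≥0))) : Measure ↥X :=
  Measure.map (fun q => q.2.1) (α.withDensity fun q => (q.2.2 : ℝ≥0∞) ^ p)

/-- Membership in the homogeneous constraint set `ℋ^p_{M,≤}(μ₁,μ₂)`. -/
def memHpM (p : ℝ) (μ₁ μ₂ : Measure ↥X) (α : Measure ((↥X × ℝ≥0) × (↥X × ℝ≥0))) : Prop :=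
  IsFiniteMeasure α ∧ (∫⁻ q, (q.1.2 : ℝ≥0∞) ^ p + (q.2.2 : ℝ≥0∞) ^ p ∂α) ≠ ∞ ∧
    hMarg1 p α ≤ μ₁ ∧ hMarg2 p α ≤ μ₂ ∧
    ∀ h : ↥X →ᵇ ℝ, (∫ q, h q.1.1 * ((q.2.1 : ℝ) - (q.1.1 : ℝ)) ∂α) = 0

end Martingale

section Helpers
open ProbabilityTheory

def subB (X : Type*) [TopologicalSpace X] [SecondCountableTopology X] [MeasurableSpace X] :
    Set (Set (ProbabilityMeasure X)) :=
  (fun r : (Set (Set X)) × ℚ => {p : ProbabilityMeasure X | Real.toNNReal r.2 < p (⋃₀ r.1)}) ''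
    ({F | F.Finite ∧ F ⊆ TopologicalSpace.countableBasis X} ×ˢ univ)

lemma subB_countable (X : Type*) [TopologicalSpace X] [SecondCountableTopology X]
    [MeasurableSpace X] : (subB X).Countable := by
  refine Set.Countable.image ?_ _
  exact (Set.countable_ofPred_finite_subset (TopologicalSpace.countable_countableBasis X)).prod
    (Set.to_countable _)

lemma isOpen_lt_open {X : Type*} [MetricSpace X] [MeasurableSpace X] [BorelSpace X]
    {U : Set X} (hU : IsOpen U) (r : ℝ≥0) : IsOpen {p : ProbabilityMeasure X | r < p U} := by
  rw [isOpen_iff_mem_nhds]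
  intro p hp
  have hp' : r < p U := hp
  have hε : (0 : ℝ≥0∞) < ((p U - r : ℝ≥0) : ℝ≥0∞) := by
    exact_mod_cast tsub_pos_of_lt hp'
  filter_upwards [ProbabilityMeasure.toMeasure_add_pos_gt_mem_nhds p hU hε] with q hq
  have hq' : ((p U : ℝ≥0) : ℝ≥0∞) < ((q U : ℝ≥0) : ℝ≥0∞) + ((p U - r : ℝ≥0) : ℝ≥0∞) := by
    simpa using hq
  have h2 : p U < q U + (p U - r) := by exact_mod_cast hq'
  have h3 : (p U : ℝ) < q U + (p U - r) := by
    have := NNReal.coe_lt_coe.2 h2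
    rwa [NNReal.coe_add, NNReal.coe_sub hp'.le] at this
  show r < q U
  exact NNReal.coe_lt_coe.1 (by linarith)

lemma topo_eq (X : Type*) [MetricSpace X] [SecondCountableTopology X] [MeasurableSpace X]
    [BorelSpace X] :
    (inferInstance : TopologicalSpace (ProbabilityMeasure X)) =
      TopologicalSpace.generateFrom (subB X) := by
  apply le_antisymm
  · refine TopologicalSpace.le_generateFrom_iff_subset_isOpen.2 ?_
    rintro _ ⟨⟨F, q⟩, ⟨⟨hF, hFB⟩, -⟩, rfl⟩
    apply isOpen_lt_open
    exact isOpen_sUnion fun u hu => (TopologicalSpace.isBasis_countableBasis X).isOpen (hFB hu)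
  · rw [← continuous_id_iff_le]
    have hfc : @FirstCountableTopology _ (TopologicalSpace.generateFrom (subB X)) := by
      have : @SecondCountableTopology _ (TopologicalSpace.generateFrom (subB X)) :=
        @SecondCountableTopology.mk _ (TopologicalSpace.generateFrom (subB X)) ⟨_, subB_countable X, rfl⟩
      exact @TopologicalSpace.SecondCountableTopology.to_firstCountableTopology _ (_) this
    rw [@continuous_iff_continuousAt _ _ (_) (_)]
    intro p
    have := hfc.nhds_generated_countable p
    refine tendsto_of_forall_isOpen_le_liminf (μs := fun q => q) ?_
    intro G hG
    refine le_of_forall_lt_imp_le_of_dense fun r hr => ?_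
    refine le_liminf_of_le ?_ ?_
    · have hb : IsBoundedUnder (· ≤ ·) (@nhds _ (TopologicalSpace.generateFrom (subB X)) p)
          (fun q : ProbabilityMeasure X => q G) :=
        isBoundedUnder_of ⟨1, fun q => q.apply_le_one G⟩
      have : (@nhds _ (TopologicalSpace.generateFrom (subB X)) p).NeBot :=
        @nhds_neBot _ (TopologicalSpace.generateFrom (subB X)) p
      exact hb.isCoboundedUnder_ge
    · obtain ⟨S, hS, rfl⟩ := (TopologicalSpace.isBasis_countableBasis X).open_eq_sUnion hG
      have hSc : S.Countable := (TopologicalSpace.countable_countableBasis X).mono hS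
      obtain ⟨q, hq0, hrq, hqp⟩ := (NNReal.lt_iff_exists_rat_btwn r _).1 hr
      have key : ∃ F : Set (Set X), F.Finite ∧ F ⊆ S ∧ Real.toNNReal q < p (⋃₀ F) := by
        have hc : Countable S := hSc.to_subtype
        have e : ⋃₀ S = ⋃ F : Finset S, ⋃ i ∈ F, (i : Set X) := by
          ext x; simp only [mem_sUnion, mem_iUnion]
          constructor
          · rintro ⟨t, ht, hx⟩; exact ⟨{⟨t, ht⟩}, ⟨t, ht⟩, by simp, hx⟩
          · rintro ⟨F, i, hi, hx⟩; exact ⟨i, i.2, hx⟩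
        have hd : Directed (· ⊆ ·) (fun F : Finset S => ⋃ i ∈ F, (i : Set X)) := by
          classical
          apply Monotone.directed_le
          intro F F' h
          exact biUnion_subset_biUnion_left h
        have h1 : ((Real.toNNReal q : ℝ≥0) : ℝ≥0∞) < (p : Measure X) (⋃₀ S) := by
          rw [← ProbabilityMeasure.ennreal_coeFn_eq_coeFn_toMeasure]; exact_mod_cast hqp
        rw [e, hd.measure_iUnion, lt_iSup_iff] at h1
        obtain ⟨F, hF⟩ := h1
        refine ⟨Subtype.val '' (F : Set S), F.finite_toSet.image _, by simp, ?_⟩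
        rw [← ProbabilityMeasure.ennreal_coeFn_eq_coeFn_toMeasure] at hF
        have h2 : ⋃₀ (Subtype.val '' (F : Set S)) = ⋃ i ∈ F, (i : Set X) := by
          simp [sUnion_image]
        rw [h2]; exact_mod_cast hF
      obtain ⟨F, hF, hFS, hqF⟩ := key
      have hmem : {p : ProbabilityMeasure X | Real.toNNReal q < p (⋃₀ F)} ∈
          @nhds _ (TopologicalSpace.generateFrom (subB X)) p := by
        refine (@IsOpen.mem_nhds_iff _ (TopologicalSpace.generateFrom (subB X)) p _ ?_).2 hqF
        exact TopologicalSpace.isOpen_generateFrom_of_mem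
          ⟨(F, q), ⟨⟨hF, hFS.trans hS⟩, mem_univ _⟩, rfl⟩
      filter_upwards [hmem] with m hm
      exact hrq.le.trans ((le_of_lt hm).trans (m.apply_mono (sUnion_subset_sUnion hFS)))

lemma secCount (X : Type*) [MetricSpace X] [SecondCountableTopology X] [MeasurableSpace X]
    [BorelSpace X] : SecondCountableTopology (ProbabilityMeasure X) :=
  ⟨⟨_, subB_countable X, topo_eq X⟩⟩

lemma opensMeas (X : Type*) [MetricSpace X] [SecondCountableTopology X] [MeasurableSpace X]
    [BorelSpace X] : OpensMeasurableSpace (ProbabilityMeasure X) := by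
  have := secCount X
  constructor
  rw [borel_eq_generateFrom_of_subbasis (topo_eq X)]
  apply MeasurableSpace.generateFrom_le
  rintro _ ⟨⟨F, q⟩, ⟨⟨hF, hFB⟩, -⟩, rfl⟩
  have hm : MeasurableSet (⋃₀ F) :=
    (isOpen_sUnion fun u hu => (TopologicalSpace.isBasis_countableBasis X).isOpen (hFB hu)).measurableSet
  have : Measurable fun p : ProbabilityMeasure X => p (⋃₀ F) :=
    ((Measure.measurable_coe hm).comp measurable_subtype_coe).ennreal_toNNReal
  exact measurableSet_lt measurable_const this

lemma measC {X₁ : Type*} [MetricSpace X₁] [PolishSpace X₁] [MeasurableSpace X₁] [BorelSpace X₁]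
    {X₂ : Type*} [MetricSpace X₂] [PolishSpace X₂] [MeasurableSpace X₂] [BorelSpace X₂]
    {C : X₁ → ProbabilityMeasure X₂ → EReal}
    (hClsc : LowerSemicontinuous fun q : X₁ × ProbabilityMeasure X₂ => C q.1 q.2)
    (κ : Kernel X₁ X₂) [IsMarkovKernel κ] :
    Measurable fun x => C x ⟨κ x, inferInstance⟩ := by
  have := secCount X₂
  have := opensMeas X₂
  have h : Measurable fun x => (x, (⟨κ x, inferInstance⟩ : ProbabilityMeasure X₂)) :=
    measurable_id.prodMk (Measurable.subtype_mk κ.measurable)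
  exact hClsc.measurable.comp h

lemma exists_dens {X : Type*} [MeasurableSpace X] (α β : Measure X) [IsFiniteMeasure α]
    [IsFiniteMeasure β] : ∃ b : X → ℝ, Measurable b ∧ (∀ x, 0 ≤ b x) ∧ (∀ x, b x ≤ 1) ∧
      α = (α + β).withDensity (fun x => ENNReal.ofReal (b x)) ∧
      β = (α + β).withDensity (fun x => ENNReal.ofReal (1 - b x)) := by
  have hle : α ≤ α + β := Measure.le_add_right le_rfl
  have hac : α ≪ α + β := Measure.absolutelyContinuous_of_le hle
  set d := α.rnDeriv (α + β) with hd
  have hdm : Measurable d := Measure.measurable_rnDeriv _ _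
  let b : X → ℝ := fun x => (min (d x) 1).toReal
  have hbm : Measurable b := (hdm.min measurable_const).ennreal_toReal
  have hb0 : ∀ x, 0 ≤ b x := fun x => ENNReal.toReal_nonneg
  have hb1 : ∀ x, b x ≤ 1 := fun x => by
    have := ENNReal.toReal_mono ENNReal.one_ne_top (min_le_right (d x) 1)
    simpa [b] using this
  have hα : α = (α + β).withDensity (fun x => ENNReal.ofReal (b x)) := by
    conv_lhs => rw [← Measure.withDensity_rnDeriv_eq α (α + β) hac]
    apply withDensity_congr_ae
    filter_upwards [Measure.rnDeriv_le_one_of_le hle] with x hx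
    have hx' : d x ≤ 1 := hx
    have : d x ≠ ∞ := ne_top_of_le_ne_top ENNReal.one_ne_top hx'
    show d x = ENNReal.ofReal (min (d x) 1).toReal
    rw [min_eq_left hx', ENNReal.ofReal_toReal this]
  refine ⟨b, hbm, hb0, hb1, hα, ?_⟩
  rw [← Measure.add_right_inj α]
  have : (fun x => ENNReal.ofReal (b x)) + (fun x => ENNReal.ofReal (1 - b x)) = 1 := by
    funext x
    simp only [Pi.add_apply, Pi.one_apply]
    rw [← ENNReal.ofReal_add (hb0 x) (by linarith [hb1 x])]
    simp
  calc α + β = (α + β).withDensity (fun x => ENNReal.ofReal (b x)) +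
        (α + β).withDensity (fun x => ENNReal.ofReal (1 - b x)) := by
        rw [← withDensity_add_left hbm.ennreal_ofReal, this, withDensity_one]
    _ = _ := by rw [← hα]

lemma measF (F : EntropyFn) {X : Type*} [MeasurableSpace X] {g : X → ℝ} (hg : Measurable g)
    (h0 : ∀ x, 0 ≤ g x) : Measurable fun x => F.F (g x) := by
  have h1 : LowerSemicontinuous (fun s : ℝ => F.F (max s 0)) := by
    rw [← lowerSemicontinuousOn_univ_iff]
    refine F.lsc.comp (g := fun s : ℝ => max s 0) (t := univ) (by fun_prop) ?_
    intro s _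
    exact le_max_right s 0
  have h2 := h1.measurable.comp hg
  convert h2 using 1
  funext x
  simp [max_eq_left (h0 x)]

lemma entF_dens (F : EntropyFn) {X : Type*} [MeasurableSpace X] (γ μ : Measure X)
    [IsFiniteMeasure μ] {g : X → ℝ} (hg : Measurable g) (h0 : ∀ x, 0 ≤ g x)
    (h : γ = μ.withDensity (fun x => ENNReal.ofReal (g x))) :
    entF F γ μ = ∫⁻ x, F.F (g x) ∂μ := by
  have hs : γ.singularPart μ = 0 := by
    subst h
    exact Measure.singularPart_withDensity _ _
  unfold entF
  rw [hs]
  simp only [Measure.coe_zero, Pi.zero_apply, mul_zero, add_zero]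
  apply lintegral_congr_ae
  have := Measure.rnDeriv_withDensity μ hg.ennreal_ofReal
  rw [← h] at this
  filter_upwards [this] with x hx
  rw [hx, ENNReal.toReal_ofReal (h0 x)]

lemma exists_dens_of_fin (F : EntropyFn) (hF : F.Superlinear) {X : Type*} [MeasurableSpace X]
    (γ μ : Measure X) [IsFiniteMeasure γ] [IsFiniteMeasure μ] (h : entF F γ μ ≠ ∞) :
    ∃ g : X → ℝ, Measurable g ∧ (∀ x, 0 ≤ g x) ∧
      γ = μ.withDensity (fun x => ENNReal.ofReal (g x)) ∧ entF F γ μ = ∫⁻ x, F.F (g x) ∂μ := by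
  have hs : γ.singularPart μ = 0 := by
    unfold entF at h
    rw [show F.recC = ∞ from hF] at h
    by_contra hne
    apply h
    rw [ENNReal.top_mul (by simpa using hne)]
    simp
  have hac : γ ≪ μ := (Measure.singularPart_eq_zero _ _).1 hs
  have hγ : γ = μ.withDensity (fun x => ENNReal.ofReal ((γ.rnDeriv μ x).toReal)) := by
    conv_lhs => rw [← Measure.withDensity_rnDeriv_eq γ μ hac]
    apply withDensity_congr_ae
    filter_upwards [Measure.rnDeriv_lt_top γ μ] with x hx
    rw [ENNReal.ofReal_toReal hx.ne]
  have hm : Measurable fun x => (γ.rnDeriv μ x).toReal :=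
    (Measure.measurable_rnDeriv _ _).ennreal_toReal
  exact ⟨_, hm, fun x => ENNReal.toReal_nonneg, hγ,
    entF_dens F γ μ hm (fun x => ENNReal.toReal_nonneg) hγ⟩

lemma entF_add (F : EntropyFn) (hF : F.Superlinear) {X : Type*} [MeasurableSpace X]
    (γ γ' μ μ' : Measure X) [IsFiniteMeasure γ] [IsFiniteMeasure γ'] [IsFiniteMeasure μ]
    [IsFiniteMeasure μ'] :
    entF F (γ + γ') (μ + μ') ≤ entF F γ μ + entF F γ' μ' := by
  by_cases h : entF F γ μ = ∞
  · simp [h]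
  by_cases h' : entF F γ' μ' = ∞
  · simp [h']
  obtain ⟨g, hg, hg0, hγ, hE⟩ := exists_dens_of_fin F hF γ μ h
  obtain ⟨g', hg', hg0', hγ', hE'⟩ := exists_dens_of_fin F hF γ' μ' h'
  obtain ⟨b, hb, hb0, hb1, hμ, hμ'⟩ := exists_dens μ μ'
  set σ := μ + μ' with hσ
  have hgF := measF F hg hg0
  have hgF' := measF F hg' hg0'
  have hb0' : ∀ x, 0 ≤ 1 - b x := fun x => by linarith [hb1 x]
  have hbm := hb.ennreal_ofReal
  have hbm' : Measurable fun x => ENNReal.ofReal (1 - b x) :=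
    (measurable_const.sub hb).ennreal_ofReal
  have hsum : γ + γ' = σ.withDensity
      (fun x => ENNReal.ofReal (b x * g x + (1 - b x) * g' x)) := by
    rw [hγ, hγ', hμ, hμ', ← withDensity_mul _ hbm hg.ennreal_ofReal,
      ← withDensity_mul _ hbm' hg'.ennreal_ofReal,
      ← withDensity_add_left (hbm.mul hg.ennreal_ofReal)]
    congr 1
    funext x
    simp only [Pi.add_apply, Pi.mul_apply]
    rw [ENNReal.ofReal_add (mul_nonneg (hb0 x) (hg0 x)) (mul_nonneg (hb0' x) (hg0' x)),
      ENNReal.ofReal_mul (hb0 x), ENNReal.ofReal_mul (hb0' x)]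
  rw [entF_dens F _ _ (by fun_prop)
    (fun x => add_nonneg (mul_nonneg (hb0 x) (hg0 x)) (mul_nonneg (hb0' x) (hg0' x))) hsum]
  calc ∫⁻ x, F.F (b x * g x + (1 - b x) * g' x) ∂σ
      ≤ ∫⁻ x, (ENNReal.ofReal (b x) * F.F (g x) + ENNReal.ofReal (1 - b x) * F.F (g' x)) ∂σ :=
        lintegral_mono fun x => F.convex' _ (hg0 x) _ (hg0' x) _ (hb0 x) (hb1 x)
    _ = entF F γ μ + entF F γ' μ' := by
        have e1 : ∫⁻ x, F.F (g x) ∂μ = ∫⁻ x, ENNReal.ofReal (b x) * F.F (g x) ∂σ := by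
          rw [hμ, lintegral_withDensity_eq_lintegral_mul _ hbm hgF]
          rfl
        have e2 : ∫⁻ x, F.F (g' x) ∂μ' = ∫⁻ x, ENNReal.ofReal (1 - b x) * F.F (g' x) ∂σ := by
          rw [hμ', lintegral_withDensity_eq_lintegral_mul _ hbm' hgF']
          rfl
        rw [hE, hE', e1, e2]
        exact lintegral_add_left (hbm.mul hgF) _

lemma entF_smul (F : EntropyFn) (hF : F.Superlinear) {X : Type*} [MeasurableSpace X]
    (γ μ : Measure X) [IsFiniteMeasure γ] [IsFiniteMeasure μ] (c : ℝ≥0) (hc : c ≠ 0) :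
    entF F (c • γ) (c • μ) ≤ c * entF F γ μ := by
  by_cases h : entF F γ μ = ∞
  · rw [h, ENNReal.mul_top (by simpa using hc)]
    exact le_top
  obtain ⟨g, hg, hg0, hγ, hE⟩ := exists_dens_of_fin F hF γ μ h
  rw [entF_dens F (c • γ) (c • μ) hg hg0 (by
    rw [show c • μ = (c : ℝ≥0∞) • μ from rfl, withDensity_smul_measure, ← hγ]; rfl), hE,
    show c • μ = (c : ℝ≥0∞) • μ from rfl, lintegral_smul_measure]
  rfl

lemma superlin_bound (F : EntropyFn) (hF : F.Superlinear) (k : ℝ) (hk : 0 ≤ k) :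
    ∃ M : ℝ≥0, ∀ s : ℝ, 0 ≤ s → ENNReal.ofReal (k * s) ≤ F.F s + M := by
  obtain ⟨s₀, hs₀, hFs₀⟩ := F.dom
  set A : ℝ := (F.F s₀).toReal with hA
  have hA0 : 0 ≤ A := ENNReal.toReal_nonneg
  have hFA : F.F s₀ = ENNReal.ofReal A := (ENNReal.ofReal_toReal hFs₀).symm
  -- frequently large quotient
  have hfr : ∃ᶠ s : ℝ in atTop, ENNReal.ofReal (k + 1) < F.F s / ENNReal.ofReal s := by
    refine frequently_lt_of_lt_limsup (by isBoundedDefault) ?_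
    have : limsup (fun s : ℝ => F.F s / ENNReal.ofReal s) atTop = ∞ := hF
    rw [this]
    exact ENNReal.ofReal_lt_top
  obtain ⟨σ, hσ, hσs⟩ := (hfr.and_eventually (eventually_gt_atTop (max s₀ A))).exists
  have hσ1 : s₀ < σ := lt_of_le_of_lt (le_max_left _ _) hσs
  have hσ2 : A < σ := lt_of_le_of_lt (le_max_right _ _) hσs
  have hσ0 : 0 < σ := hs₀.trans hσ1
  have hFσ : ENNReal.ofReal ((k + 1) * σ) ≤ F.F σ := by
    rw [ENNReal.ofReal_mul (by linarith)]
    rw [ENNReal.lt_div_iff_mul_lt (Or.inl (by simpa using hσ0)) (Or.inl (by simp))] at hσ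
    exact hσ.le
  refine ⟨(k * σ).toNNReal, fun s hs => ?_⟩
  by_cases hsσ : s ≤ σ
  · refine le_trans ?_ le_add_self
    exact ENNReal.ofReal_le_ofReal (mul_le_mul_of_nonneg_left hsσ hk)
  push Not at hsσ
  refine le_trans ?_ le_self_add
  by_cases hFs : F.F s = ∞
  · simp [hFs]
  set B : ℝ := (F.F s).toReal with hB
  have hFB : F.F s = ENNReal.ofReal B := (ENNReal.ofReal_toReal hFs).symm
  have hB0 : 0 ≤ B := ENNReal.toReal_nonneg
  rw [hFB]
  apply ENNReal.ofReal_le_ofReal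
  -- σ = t s₀ + (1-t) s
  set t : ℝ := (s - σ) / (s - s₀) with ht
  have hss : 0 < s - s₀ := by linarith
  have ht0 : 0 ≤ t := div_nonneg (by linarith) hss.le
  have ht1 : t ≤ 1 := (div_le_one hss).2 (by linarith)
  have hts : t * (s - s₀) = s - σ := div_mul_cancel₀ _ hss.ne'
  have hc := F.convex' s₀ hs₀.le s hs t ht0 ht1
  rw [show t * s₀ + (1 - t) * s = σ by linarith, hFA, hFB, ← ENNReal.ofReal_mul ht0,
    ← ENNReal.ofReal_mul (by linarith), ← ENNReal.ofReal_add (by positivity)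
    (mul_nonneg (by linarith) hB0)] at hc
  have hc2 := (ENNReal.ofReal_le_ofReal_iff (add_nonneg (by positivity)
    (mul_nonneg (by linarith) hB0))).1 (hFσ.trans hc)
  -- (k+1)σ ≤ t A + (1-t) B
  by_contra hlt
  push Not at hlt
  have hts1 : 0 < 1 - t := by
    have : 1 - t = (σ - s₀) / (s - s₀) := by rw [ht]; field_simp; ring
    rw [this]; exact div_pos (by linarith) hss
  have h1 : (1 - t) * B ≤ (1 - t) * (k * s) := mul_le_mul_of_nonneg_left hlt.le hts1.le
  have h2 : (1 - t) * s = σ - t * s₀ := by linarith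
  have h3 : (1 - t) * (k * s) = k * σ - k * (t * s₀) := by
    rw [show (1 - t) * (k * s) = k * ((1 - t) * s) by ring, h2]; ring
  have h4 : t * A ≤ A := by nlinarith
  have h5 : 0 ≤ k * (t * s₀) := by positivity
  nlinarith

lemma posE_eq (a : EReal) : posE a = a.toENNReal := rfl

lemma pos_shift (a : EReal) (k : ℝ) (hk : 0 ≤ k) (ha : ((-k : ℝ) : EReal) ≤ a) :
    posE a + ENNReal.ofReal k = (a + (k : EReal)).toENNReal + posE (-a) := by
  induction a with
  | bot => simp at ha
  | top => simp [posE_eq]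
  | coe r =>
    have hr : -k ≤ r := by exact_mod_cast ha
    rw [posE_eq, posE_eq, ← EReal.coe_add, ← EReal.coe_neg, EReal.real_coe_toENNReal,
      EReal.real_coe_toENNReal, EReal.real_coe_toENNReal]
    rcases le_total 0 r with h | h
    · rw [ENNReal.ofReal_add h hk, ENNReal.ofReal_of_nonpos (p := -r) (by linarith), add_zero]
    · rw [ENNReal.ofReal_of_nonpos h, ← ENNReal.ofReal_add (by linarith) (by linarith)]
      simp

lemma neg_bd (a : EReal) (k : ℝ) (ha : ((-k : ℝ) : EReal) ≤ a) :
    posE (-a) ≤ ENNReal.ofReal k := by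
  rw [posE_eq, ← EReal.real_coe_toENNReal]
  apply EReal.toENNReal_le_toENNReal
  rw [EReal.neg_le]
  exact_mod_cast ha

lemma eIntegral_eq {α : Type*} [MeasurableSpace α] (μ : Measure α) [IsFiniteMeasure μ]
    {f : α → EReal} (hf : Measurable f) (k : ℝ) (hk : 0 ≤ k)
    (h : ∀ x, ((-k : ℝ) : EReal) ≤ f x) :
    eIntegral μ f = ((∫⁻ x, (f x + (k : EReal)).toENNReal ∂μ : ℝ≥0∞) : EReal)
      - ((k * μ.real univ : ℝ) : EReal) := by
  have hm2 : Measurable fun x => posE (-(f x)) := by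
    simp only [posE_eq]
    exact hf.neg.ereal_toENNReal
  have e : ∫⁻ x, posE (f x) ∂μ + ENNReal.ofReal k * μ univ =
      ∫⁻ x, (f x + (k : EReal)).toENNReal ∂μ + ∫⁻ x, posE (-(f x)) ∂μ := by
    rw [← lintegral_const, ← lintegral_add_right _ measurable_const, ← lintegral_add_right _ hm2]
    exact lintegral_congr fun x => pos_shift _ _ hk (h x)
  have hfin : ∫⁻ x, posE (-(f x)) ∂μ ≠ ∞ := by
    refine ne_top_of_le_ne_top ?_ (lintegral_mono fun x => neg_bd _ _ (h x))
    rw [lintegral_const]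
    exact ENNReal.mul_ne_top ENNReal.ofReal_ne_top (measure_ne_top _ _)
  unfold eIntegral
  generalize ∫⁻ x, posE (f x) ∂μ = P at *
  generalize ∫⁻ x, posE (-(f x)) ∂μ = N at *
  generalize ∫⁻ x, (f x + (k : EReal)).toENNReal ∂μ = D at *
  have hkm : ENNReal.ofReal k * μ univ = ENNReal.ofReal (k * μ.real univ) := by
    rw [ENNReal.ofReal_mul hk, ofReal_measureReal]
  rw [hkm] at e
  have hkn : 0 ≤ k * μ.real univ := by positivity
  generalize k * μ.real univ = c at *
  lift N to ℝ≥0 using hfin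
  induction P with
  | top =>
    have : D = ∞ := by
      rw [top_add] at e
      by_contra hD
      exact (ENNReal.add_ne_top.2 ⟨hD, ENNReal.coe_ne_top⟩) e.symm
    subst this
    rw [EReal.coe_ennreal_top, EReal.top_sub_coe]
    exact EReal.top_sub_coe _
  | coe p =>
    have : D ≠ ∞ := by
      intro hD
      rw [hD, top_add] at e
      exact (ENNReal.add_ne_top.2 ⟨ENNReal.coe_ne_top, ENNReal.ofReal_ne_top⟩) e
    lift D to ℝ≥0 using this
    have e2 : p + c.toNNReal = D + N := by
      have : ((p + c.toNNReal : ℝ≥0) : ℝ≥0∞) = ((D + N : ℝ≥0) : ℝ≥0∞) := by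
        push_cast; exact e
      exact_mod_cast this
    have e3 : (p : ℝ) + c = D + N := by
      have := congrArg NNReal.toReal e2
      simpa [Real.coe_toNNReal _ hkn] using this
    have : ((p : ℝ) : EReal) - ((N : ℝ) : EReal) = ((D : ℝ) : EReal) - (c : EReal) := by
      rw [← EReal.coe_sub, ← EReal.coe_sub]
      congr 1
      linarith
    exact this

section TR

variable {X₁ : Type*} [MetricSpace X₁] [PolishSpace X₁] [MeasurableSpace X₁] [BorelSpace X₁]
    {X₂ : Type*} [MetricSpace X₂] [PolishSpace X₂] [MeasurableSpace X₂] [BorelSpace X₂]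
    [Nonempty X₂]

def trP (C : X₁ → ProbabilityMeasure X₂ → EReal) (k : ℝ) (γ : Measure (X₁ × X₂))
    [IsFiniteMeasure γ] : ℝ≥0∞ :=
  ∫⁻ x, (C x ⟨γ.condKernel x, inferInstance⟩ + (k : EReal)).toENNReal ∂γ.fst

lemma conv_shift {a b m : EReal} {t k : ℝ} (ht0 : 0 ≤ t) (ht1 : t ≤ 1)
    (ha : ((-k : ℝ) : EReal) ≤ a) (hb : ((-k : ℝ) : EReal) ≤ b)
    (h : m ≤ (t : EReal) * a + ((1 - t : ℝ) : EReal) * b) :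
    (m + (k : EReal)).toENNReal ≤ ENNReal.ofReal t * (a + (k : EReal)).toENNReal +
      ENNReal.ofReal (1 - t) * (b + (k : EReal)).toENNReal := by
  have sh : ∀ c : EReal, ((-k : ℝ) : EReal) ≤ c → 0 ≤ c + (k : EReal) := by
    intro c hc
    have := add_le_add_left hc (k : EReal)
    rwa [← EReal.coe_add, neg_add_cancel, EReal.coe_zero] at this
  have ht1' : 0 ≤ 1 - t := by linarith
  have key : ∀ (c : EReal) (s : ℝ), 0 ≤ s → ((-k : ℝ) : EReal) ≤ c →
      (s : EReal) * c + ((s * k : ℝ) : EReal) = (s : EReal) * (c + (k : EReal)) := by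
    intro c s hs hc
    rw [EReal.left_distrib_of_nonneg_of_ne_top (by exact_mod_cast hs) (EReal.coe_ne_top _),
      EReal.coe_mul]
  have h2 : m + (k : EReal) ≤ (t : EReal) * (a + k) + ((1 - t : ℝ) : EReal) * (b + k) := by
    rw [← key a t ht0 ha, ← key b _ ht1' hb]
    calc m + (k : EReal) ≤ ((t : EReal) * a + ((1 - t : ℝ) : EReal) * b) + (k : EReal) :=
          add_le_add_left h _
      _ = _ := by
        have : (k : EReal) = ((t * k : ℝ) : EReal) + (((1 - t) * k : ℝ) : EReal) := by
          rw [← EReal.coe_add]; congr 1; ring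
        nth_rewrite 1 [this]
        rw [add_add_add_comm]
  refine (EReal.toENNReal_le_toENNReal h2).trans ?_
  refine EReal.toENNReal_add_le.trans ?_
  rw [EReal.toENNReal_mul (by exact_mod_cast ht0), EReal.toENNReal_mul (by exact_mod_cast ht1'),
    EReal.real_coe_toENNReal, EReal.real_coe_toENNReal]

lemma trP_smul (C : X₁ → ProbabilityMeasure X₂ → EReal) (k : ℝ) (γ : Measure (X₁ × X₂))
    [IsFiniteMeasure γ] (c : ℝ≥0) (hc : c ≠ 0) :
    trP C k (c • γ) = c * trP C k γ := by
  unfold trP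
  have hf : (c • γ).fst = (c : ℝ≥0∞) • γ.fst := by
    unfold Measure.fst
    rw [show c • γ = (c : ℝ≥0∞) • γ from rfl, Measure.map_smul]
  have h : ∀ᵐ x ∂(c • γ).fst, γ.condKernel x = (c • γ).condKernel x := by
    apply eq_condKernel_of_measure_eq_compProd
    rw [hf]
    conv_lhs => rw [← Measure.disintegrate γ γ.condKernel]
    ext s hs
    rw [Measure.compProd_apply hs, lintegral_smul_measure, ← Measure.compProd_apply hs]
    rfl
  rw [← smul_eq_mul, ← lintegral_smul_measure, ← hf]
  apply lintegral_congr_ae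
  filter_upwards [h] with x hx
  congr 3
  exact Subtype.ext hx.symm

lemma trP_add {C : X₁ → ProbabilityMeasure X₂ → EReal}
    (hClsc : LowerSemicontinuous fun q : X₁ × ProbabilityMeasure X₂ => C q.1 q.2)
    {k : ℝ} (hCb : ∀ x p, ((-k : ℝ) : EReal) ≤ C x p)
    (hCconv : ∀ (x : X₁) (p q m : ProbabilityMeasure X₂) (t : ℝ), 0 ≤ t → t ≤ 1 →
      (m : Measure X₂) = ENNReal.ofReal t • (p : Measure X₂)
          + ENNReal.ofReal (1 - t) • (q : Measure X₂) →
      C x m ≤ (t : EReal) * C x p + ((1 - t : ℝ) : EReal) * C x q)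
    (γ γ' : Measure (X₁ × X₂)) [IsFiniteMeasure γ] [IsFiniteMeasure γ'] :
    trP C k (γ + γ') ≤ trP C k γ + trP C k γ' := by
  obtain ⟨b, hb, hb0, hb1, hμ, hμ'⟩ := exists_dens γ.fst γ'.fst
  have hf : (γ + γ').fst = γ.fst + γ'.fst := by
    unfold Measure.fst
    rw [Measure.map_add _ _ measurable_fst]
  set τ := γ.fst + γ'.fst with hτ
  have hbm := hb.ennreal_ofReal
  have hbm' : Measurable fun x => ENNReal.ofReal (1 - b x) :=
    (measurable_const.sub hb).ennreal_ofReal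
  have hap : ∀ s, MeasurableSet s → Measurable fun x => ENNReal.ofReal (b x) * γ.condKernel x s :=
    fun s hs => hbm.mul (Kernel.measurable_coe _ hs)
  have hap' : ∀ s, MeasurableSet s →
      Measurable fun x => ENNReal.ofReal (1 - b x) * γ'.condKernel x s :=
    fun s hs => hbm'.mul (Kernel.measurable_coe _ hs)
  let κ : Kernel X₁ X₂ :=
    { toFun := fun x => ENNReal.ofReal (b x) • γ.condKernel x
        + ENNReal.ofReal (1 - b x) • γ'.condKernel x
      measurable' := by
        apply Measure.measurable_of_measurable_coe
        intro s hs
        simp only [Measure.coe_add, Measure.coe_smul, Pi.add_apply, Pi.smul_apply, smul_eq_mul]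
        exact (hap s hs).add (hap' s hs) }
  have hκ : ∀ x, κ x = ENNReal.ofReal (b x) • γ.condKernel x
        + ENNReal.ofReal (1 - b x) • γ'.condKernel x := fun x => rfl
  have hκp : IsMarkovKernel κ := by
    constructor
    intro x
    constructor
    rw [hκ]
    simp only [Measure.coe_add, Measure.coe_smul, Pi.add_apply, Pi.smul_apply, smul_eq_mul,
      measure_univ, mul_one]
    rw [← ENNReal.ofReal_add (hb0 x) (by linarith [hb1 x])]
    simp
  have h : ∀ᵐ x ∂(γ + γ').fst, κ x = (γ + γ').condKernel x := by
    apply eq_condKernel_of_measure_eq_compProd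
    rw [hf]
    ext s hs
    rw [Measure.compProd_apply hs]
    have m1 : Measurable fun x => γ.condKernel x (Prod.mk x ⁻¹' s) :=
      Kernel.measurable_kernel_prodMk_left hs
    have m2 : Measurable fun x => γ'.condKernel x (Prod.mk x ⁻¹' s) :=
      Kernel.measurable_kernel_prodMk_left hs
    have e1 : γ s = ∫⁻ x, ENNReal.ofReal (b x) * γ.condKernel x (Prod.mk x ⁻¹' s) ∂τ := by
      conv_lhs => rw [← Measure.disintegrate γ γ.condKernel]
      rw [Measure.compProd_apply hs]
      conv_lhs => rw [hμ]
      rw [lintegral_withDensity_eq_lintegral_mul _ hbm m1]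
      rfl
    have e2 : γ' s = ∫⁻ x, ENNReal.ofReal (1 - b x) * γ'.condKernel x (Prod.mk x ⁻¹' s) ∂τ := by
      conv_lhs => rw [← Measure.disintegrate γ' γ'.condKernel]
      rw [Measure.compProd_apply hs]
      conv_lhs => rw [hμ']
      rw [lintegral_withDensity_eq_lintegral_mul _ hbm' m2]
      rfl
    rw [Measure.coe_add, Pi.add_apply, e1, e2]
    exact (lintegral_add_left (hbm.mul m1) _).symm
  have M1 : Measurable fun x => (C x ⟨γ.condKernel x, inferInstance⟩ + (k : EReal)).toENNReal :=
    ((measC hClsc γ.condKernel).add_const _).ereal_toENNReal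
  have M2 : Measurable fun x => (C x ⟨γ'.condKernel x, inferInstance⟩ + (k : EReal)).toENNReal :=
    ((measC hClsc γ'.condKernel).add_const _).ereal_toENNReal
  have e1 : trP C k γ = ∫⁻ x, ENNReal.ofReal (b x) *
      (C x ⟨γ.condKernel x, inferInstance⟩ + (k : EReal)).toENNReal ∂τ := by
    unfold trP
    conv_lhs => rw [hμ]
    rw [lintegral_withDensity_eq_lintegral_mul _ hbm M1]
    rfl
  have e2 : trP C k γ' = ∫⁻ x, ENNReal.ofReal (1 - b x) *
      (C x ⟨γ'.condKernel x, inferInstance⟩ + (k : EReal)).toENNReal ∂τ := by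
    unfold trP
    conv_lhs => rw [hμ']
    rw [lintegral_withDensity_eq_lintegral_mul _ hbm' M2]
    rfl
  rw [e1, e2]
  refine le_trans ?_ (lintegral_add_left (hbm.mul M1) _).le
  unfold trP
  rw [hf] at h
  rw [hf]
  apply lintegral_mono_ae
  filter_upwards [h] with x hx
  exact conv_shift (hb0 x) (hb1 x) (hCb _ _) (hCb _ _)
    (hCconv x _ _ _ (b x) (hb0 x) (hb1 x) (by
      rw [hκ] at hx
      exact hx.symm))

end TR

section MN

variable {X₁ : Type*} [MetricSpace X₁] [PolishSpace X₁] [MeasurableSpace X₁] [BorelSpace X₁]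
    {X₂ : Type*} [MetricSpace X₂] [PolishSpace X₂] [MeasurableSpace X₂] [BorelSpace X₂]
    [Nonempty X₂]

def Jf (C : X₁ → ProbabilityMeasure X₂ → EReal) (k : ℝ) (F₁ F₂ : EntropyFn)
    (μ₁ : Measure X₁) (μ₂ : Measure X₂) (γ : Measure (X₁ × X₂)) [IsFiniteMeasure γ] : ℝ≥0∞ :=
  entF F₁ γ.fst μ₁ + entF F₂ γ.snd μ₂ + trP C k γ

lemma wCost_eq {C : X₁ → ProbabilityMeasure X₂ → EReal}
    (hClsc : LowerSemicontinuous fun q : X₁ × ProbabilityMeasure X₂ => C q.1 q.2)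
    {k : ℝ} (hk : 0 ≤ k) (hCb : ∀ x p, ((-k : ℝ) : EReal) ≤ C x p)
    (F₁ F₂ : EntropyFn) (μ₁ : Measure X₁) (μ₂ : Measure X₂) (γ : Measure (X₁ × X₂))
    (hγ : IsFiniteMeasure γ) :
    wCost C F₁ F₂ μ₁ μ₂ γ hγ = (Jf C k F₁ F₂ μ₁ μ₂ γ : EReal) + ((-(k * γ.real univ) : ℝ) : EReal) := by
  unfold wCost
  rw [eIntegral_eq γ.fst (measC hClsc γ.condKernel) k hk (fun x => hCb _ _)]
  have : γ.fst.real univ = γ.real univ := by simp [Measure.real, Measure.fst_univ]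
  rw [this, sub_eq_add_neg, ← add_assoc, EReal.coe_neg, ← EReal.coe_ennreal_add,
    ← EReal.coe_ennreal_add]
  rfl

lemma wCost_add {C : X₁ → ProbabilityMeasure X₂ → EReal}
    (hClsc : LowerSemicontinuous fun q : X₁ × ProbabilityMeasure X₂ => C q.1 q.2)
    {k : ℝ} (hk : 0 ≤ k) (hCb : ∀ x p, ((-k : ℝ) : EReal) ≤ C x p)
    (hCconv : ∀ (x : X₁) (p q m : ProbabilityMeasure X₂) (t : ℝ), 0 ≤ t → t ≤ 1 →
      (m : Measure X₂) = ENNReal.ofReal t • (p : Measure X₂)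
          + ENNReal.ofReal (1 - t) • (q : Measure X₂) →
      C x m ≤ (t : EReal) * C x p + ((1 - t : ℝ) : EReal) * C x q)
    (F₁ F₂ : EntropyFn) (hF₁ : F₁.Superlinear) (hF₂ : F₂.Superlinear)
    (μ₁ μ₁' : Measure X₁) (μ₂ μ₂' : Measure X₂) [IsFiniteMeasure μ₁] [IsFiniteMeasure μ₁']
    [IsFiniteMeasure μ₂] [IsFiniteMeasure μ₂']
    (γ γ' : Measure (X₁ × X₂)) (hγ : IsFiniteMeasure γ) (hγ' : IsFiniteMeasure γ') :
    wCost C F₁ F₂ (μ₁ + μ₁') (μ₂ + μ₂') (γ + γ') inferInstance ≤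
      wCost C F₁ F₂ μ₁ μ₂ γ hγ + wCost C F₁ F₂ μ₁' μ₂' γ' hγ' := by
  rw [wCost_eq hClsc hk hCb, wCost_eq hClsc hk hCb, wCost_eq hClsc hk hCb]
  have hf : (γ + γ').fst = γ.fst + γ'.fst := by
    unfold Measure.fst
    rw [Measure.map_add _ _ measurable_fst]
  have hs : (γ + γ').snd = γ.snd + γ'.snd := by
    unfold Measure.snd
    rw [Measure.map_add _ _ measurable_snd]
  have hJ : Jf C k F₁ F₂ (μ₁ + μ₁') (μ₂ + μ₂') (γ + γ') ≤
      Jf C k F₁ F₂ μ₁ μ₂ γ + Jf C k F₁ F₂ μ₁' μ₂' γ' := by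
    unfold Jf
    rw [hf, hs]
    refine (add_le_add (add_le_add (entF_add F₁ hF₁ _ _ _ _) (entF_add F₂ hF₂ _ _ _ _))
      (trP_add hClsc hCb hCconv γ γ')).trans (le_of_eq ?_)
    ring
  have hm : -(k * (γ + γ').real univ) = -(k * γ.real univ) + -(k * γ'.real univ) := by
    rw [measureReal_add_apply]; ring
  rw [hm, EReal.coe_add, add_add_add_comm, ← EReal.coe_ennreal_add]
  exact add_le_add_left (EReal.coe_ennreal_le_coe_ennreal_iff.2 hJ) _

lemma wCost_smul {C : X₁ → ProbabilityMeasure X₂ → EReal}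
    (hClsc : LowerSemicontinuous fun q : X₁ × ProbabilityMeasure X₂ => C q.1 q.2)
    {k : ℝ} (hk : 0 ≤ k) (hCb : ∀ x p, ((-k : ℝ) : EReal) ≤ C x p)
    (F₁ F₂ : EntropyFn) (hF₁ : F₁.Superlinear) (hF₂ : F₂.Superlinear)
    (μ₁ : Measure X₁) (μ₂ : Measure X₂) [IsFiniteMeasure μ₁] [IsFiniteMeasure μ₂]
    (γ : Measure (X₁ × X₂)) (hγ : IsFiniteMeasure γ) (c : ℝ≥0) (hc : c ≠ 0) :
    wCost C F₁ F₂ (c • μ₁) (c • μ₂) (c • γ) inferInstance ≤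
      ((c : ℝ) : EReal) * wCost C F₁ F₂ μ₁ μ₂ γ hγ := by
  rw [wCost_eq hClsc hk hCb, wCost_eq hClsc hk hCb]
  have hf : (c • γ).fst = c • γ.fst := by
    unfold Measure.fst
    rw [show c • γ = (c : ℝ≥0∞) • γ from rfl, Measure.map_smul]
    rfl
  have hs : (c • γ).snd = c • γ.snd := by
    unfold Measure.snd
    rw [show c • γ = (c : ℝ≥0∞) • γ from rfl, Measure.map_smul]
    rfl
  have hJ : Jf C k F₁ F₂ (c • μ₁) (c • μ₂) (c • γ) ≤ c * Jf C k F₁ F₂ μ₁ μ₂ γ := by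
    unfold Jf
    rw [hf, hs, mul_add, mul_add]
    exact add_le_add (add_le_add (entF_smul F₁ hF₁ _ _ c hc) (entF_smul F₂ hF₂ _ _ c hc))
      (trP_smul C k γ c hc).le
  have hm : -(k * (c • γ).real univ) = c * -(k * γ.real univ) := by
    rw [measureReal_nnreal_smul_apply]; ring
  rw [hm, EReal.left_distrib_of_nonneg_of_ne_top (by exact_mod_cast c.2) (EReal.coe_ne_top _),
    EReal.coe_mul]
  refine add_le_add_left ?_ _
  have := EReal.coe_ennreal_le_coe_ennreal_iff.2 hJ
  rwa [EReal.coe_ennreal_mul] at this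

lemma wCost_lb {C : X₁ → ProbabilityMeasure X₂ → EReal}
    (hClsc : LowerSemicontinuous fun q : X₁ × ProbabilityMeasure X₂ => C q.1 q.2)
    {k : ℝ} (hk : 0 ≤ k) (hCb : ∀ x p, ((-k : ℝ) : EReal) ≤ C x p)
    (F₁ F₂ : EntropyFn) (hF₁ : F₁.Superlinear) :
    ∃ M : ℝ≥0, ∀ (μ₁ : Measure X₁) (μ₂ : Measure X₂) (_ : IsFiniteMeasure μ₁)
      (_ : IsFiniteMeasure μ₂) (γ : Measure (X₁ × X₂)) (hγ : IsFiniteMeasure γ),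
      ((-(M * μ₁.real univ) : ℝ) : EReal) ≤ wCost C F₁ F₂ μ₁ μ₂ γ hγ := by
  obtain ⟨M, hM⟩ := superlin_bound F₁ hF₁ k hk
  refine ⟨M, fun μ₁ μ₂ h₁ h₂ γ hγ => ?_⟩
  rw [wCost_eq hClsc hk hCb]
  have hle : entF F₁ γ.fst μ₁ ≤ Jf C k F₁ F₂ μ₁ μ₂ γ :=
    le_self_add.trans le_self_add
  have key : ENNReal.ofReal k * γ univ ≤ Jf C k F₁ F₂ μ₁ μ₂ γ + M * μ₁ univ := by
    by_cases h : entF F₁ γ.fst μ₁ = ∞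
    · rw [h, top_le_iff] at hle
      simp [hle]
    obtain ⟨g, hg, hg0, hγg, hE⟩ := exists_dens_of_fin F₁ hF₁ γ.fst μ₁ h
    refine le_trans ?_ (add_le_add_left hle _)
    rw [hE, ← Measure.fst_univ, hγg, withDensity_apply _ MeasurableSet.univ, setLIntegral_univ,
      ← lintegral_const_mul _ hg.ennreal_ofReal, ← lintegral_const,
      ← lintegral_add_right _ measurable_const]
    apply lintegral_mono
    intro x
    have := hM (g x) (hg0 x)
    rwa [ENNReal.ofReal_mul hk] at this
  generalize Jf C k F₁ F₂ μ₁ μ₂ γ = J at key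
  induction J with
  | top => 
    rw [EReal.coe_ennreal_top, EReal.top_add_coe]
    exact le_top
  | coe j =>
    have h2 := ENNReal.toReal_mono (ENNReal.add_ne_top.2 ⟨ENNReal.coe_ne_top,
      ENNReal.mul_ne_top ENNReal.coe_ne_top (measure_ne_top _ _)⟩) key
    rw [ENNReal.toReal_mul, ENNReal.toReal_ofReal hk, ENNReal.toReal_add ENNReal.coe_ne_top
      (ENNReal.mul_ne_top ENNReal.coe_ne_top (measure_ne_top _ _)), ENNReal.toReal_mul] at h2
    have h3 : k * γ.real univ ≤ (j : ℝ) + M * μ₁.real univ := h2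
    have : ((-(M * μ₁.real univ) : ℝ) : EReal) ≤ ((j : ℝ) : EReal) + ((-(k * γ.real univ) : ℝ) : EReal) := by
      rw [← EReal.coe_add]
      exact_mod_cast (by linarith)
    exact this

lemma ETsgn_coe (C : X₁ → ProbabilityMeasure X₂ → EReal) (F₁ F₂ : EntropyFn)
    (μ₁ : Measure X₁) (μ₂ : Measure X₂) [h₁ : IsFiniteMeasure μ₁] [h₂ : IsFiniteMeasure μ₂] :
    ETsgn C F₁ F₂ μ₁.toSignedMeasure μ₂.toSignedMeasure = wOpt C F₁ F₂ μ₁ μ₂ := by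
  unfold ETsgn
  apply le_antisymm
  · exact sInf_le ⟨μ₁, h₁, μ₂, h₂, rfl, rfl, rfl⟩
  · apply le_sInf
    rintro _ ⟨m₁, i₁, m₂, i₂, e₁, e₂, rfl⟩
    rw [Measure.toSignedMeasure_eq_toSignedMeasure_iff] at e₁ e₂
    rw [e₁, e₂]

lemma ETsgn_cases (C : X₁ → ProbabilityMeasure X₂ → EReal) (F₁ F₂ : EntropyFn)
    (ν₁ : SignedMeasure X₁) (ν₂ : SignedMeasure X₂) :
    ETsgn C F₁ F₂ ν₁ ν₂ = ⊤ ∨ ∃ (μ₁ : Measure X₁) (h₁ : IsFiniteMeasure μ₁)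
      (μ₂ : Measure X₂) (h₂ : IsFiniteMeasure μ₂),
      ν₁ = @Measure.toSignedMeasure X₁ _ μ₁ h₁ ∧ ν₂ = @Measure.toSignedMeasure X₂ _ μ₂ h₂ := by
  by_cases h : ∃ (μ₁ : Measure X₁) (h₁ : IsFiniteMeasure μ₁)
      (μ₂ : Measure X₂) (h₂ : IsFiniteMeasure μ₂),
      ν₁ = @Measure.toSignedMeasure X₁ _ μ₁ h₁ ∧ ν₂ = @Measure.toSignedMeasure X₂ _ μ₂ h₂
  · exact Or.inr h
  · left
    unfold ETsgn
    rw [sInf_eq_top]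
    rintro _ ⟨m₁, i₁, m₂, i₂, e₁, e₂, rfl⟩
    exact absurd ⟨m₁, i₁, m₂, i₂, e₁, e₂⟩ h

lemma ETsgn_ne_bot {C : X₁ → ProbabilityMeasure X₂ → EReal}
    (hClsc : LowerSemicontinuous fun q : X₁ × ProbabilityMeasure X₂ => C q.1 q.2)
    {k : ℝ} (hk : 0 ≤ k) (hCb : ∀ x p, ((-k : ℝ) : EReal) ≤ C x p)
    (F₁ F₂ : EntropyFn) (hF₁ : F₁.Superlinear)
    (ν₁ : SignedMeasure X₁) (ν₂ : SignedMeasure X₂) : ETsgn C F₁ F₂ ν₁ ν₂ ≠ ⊥ := by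
  rcases ETsgn_cases C F₁ F₂ ν₁ ν₂ with h | ⟨μ₁, h₁, μ₂, h₂, rfl, rfl⟩
  · simp [h]
  rw [ETsgn_coe]
  obtain ⟨M, hM⟩ := wCost_lb hClsc hk hCb F₁ F₂ hF₁
  have : ((-(M * μ₁.real univ) : ℝ) : EReal) ≤ wOpt C F₁ F₂ μ₁ μ₂ := by
    apply le_sInf
    rintro _ ⟨γ, hγ, rfl⟩
    exact hM μ₁ μ₂ h₁ h₂ γ hγ
  intro hb
  rw [hb, le_bot_iff] at this
  exact EReal.coe_ne_bot _ this

lemma ETsgn_zero {C : X₁ → ProbabilityMeasure X₂ → EReal}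
    (hClsc : LowerSemicontinuous fun q : X₁ × ProbabilityMeasure X₂ => C q.1 q.2)
    {k : ℝ} (hk : 0 ≤ k) (hCb : ∀ x p, ((-k : ℝ) : EReal) ≤ C x p)
    (F₁ F₂ : EntropyFn) (hF₁ : F₁.Superlinear) : ETsgn C F₁ F₂ 0 0 = 0 := by
  rw [← Measure.toSignedMeasure_zero, ← Measure.toSignedMeasure_zero, ETsgn_coe]
  obtain ⟨M, hM⟩ := wCost_lb hClsc hk hCb F₁ F₂ hF₁
  apply le_antisymm
  · apply sInf_le
    refine ⟨0, inferInstance, ?_⟩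
    rw [wCost_eq hClsc hk hCb]
    simp [Jf, entF, trP]
  · apply le_sInf
    rintro _ ⟨γ, hγ, rfl⟩
    have := hM 0 0 inferInstance inferInstance γ hγ
    simpa using this

lemma ETsgn_smul_le {C : X₁ → ProbabilityMeasure X₂ → EReal}
    (hClsc : LowerSemicontinuous fun q : X₁ × ProbabilityMeasure X₂ => C q.1 q.2)
    {k : ℝ} (hk : 0 ≤ k) (hCb : ∀ x p, ((-k : ℝ) : EReal) ≤ C x p)
    (F₁ F₂ : EntropyFn) (hF₁ : F₁.Superlinear) (hF₂ : F₂.Superlinear)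
    (ν₁ : SignedMeasure X₁) (ν₂ : SignedMeasure X₂) (l : ℝ) (hl : 0 < l) :
    ETsgn C F₁ F₂ (l • ν₁) (l • ν₂) ≤ (l : EReal) * ETsgn C F₁ F₂ ν₁ ν₂ := by
  rcases ETsgn_cases C F₁ F₂ ν₁ ν₂ with h | ⟨μ₁, h₁, μ₂, h₂, rfl, rfl⟩
  · rw [h, EReal.coe_mul_top_of_pos hl]
    exact le_top
  lift l to ℝ≥0 using hl.le
  have hc : l ≠ 0 := by rintro rfl; simp at hl
  have e₁ : (l : ℝ) • μ₁.toSignedMeasure = (l • μ₁).toSignedMeasure :=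
    (Measure.toSignedMeasure_smul μ₁ l).symm
  have e₂ : (l : ℝ) • μ₂.toSignedMeasure = (l • μ₂).toSignedMeasure :=
    (Measure.toSignedMeasure_smul μ₂ l).symm
  rw [e₁, e₂, ETsgn_coe, ETsgn_coe]
  have hl' : (0 : EReal) < ((l : ℝ) : EReal) := by exact_mod_cast hl
  rw [← EReal.div_le_iff_le_mul hl' (EReal.coe_ne_top _)]
  apply le_sInf
  rintro _ ⟨γ, hγ, rfl⟩
  rw [EReal.div_le_iff_le_mul hl' (EReal.coe_ne_top _)]
  have h0 : wOpt C F₁ F₂ (l • μ₁) (l • μ₂)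
      ≤ wCost C F₁ F₂ (l • μ₁) (l • μ₂) (l • γ) inferInstance :=
    sInf_le ⟨l • γ, inferInstance, rfl⟩
  exact h0.trans
    (wCost_smul hClsc hk hCb F₁ F₂ hF₁ hF₂ μ₁ μ₂ γ hγ l hc)

lemma ETsgn_smul {C : X₁ → ProbabilityMeasure X₂ → EReal}
    (hClsc : LowerSemicontinuous fun q : X₁ × ProbabilityMeasure X₂ => C q.1 q.2)
    {k : ℝ} (hk : 0 ≤ k) (hCb : ∀ x p, ((-k : ℝ) : EReal) ≤ C x p)
    (F₁ F₂ : EntropyFn) (hF₁ : F₁.Superlinear) (hF₂ : F₂.Superlinear)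
    (ν₁ : SignedMeasure X₁) (ν₂ : SignedMeasure X₂) (l : ℝ) (hl : 0 ≤ l) :
    ETsgn C F₁ F₂ (l • ν₁) (l • ν₂) = (l : EReal) * ETsgn C F₁ F₂ ν₁ ν₂ := by
  rcases hl.eq_or_lt with rfl | hl
  · rw [zero_smul, zero_smul, EReal.coe_zero, zero_mul, ETsgn_zero hClsc hk hCb F₁ F₂ hF₁]
  apply le_antisymm (ETsgn_smul_le hClsc hk hCb F₁ F₂ hF₁ hF₂ ν₁ ν₂ l hl)
  have h := ETsgn_smul_le hClsc hk hCb F₁ F₂ hF₁ hF₂ (l • ν₁) (l • ν₂) l⁻¹ (inv_pos.2 hl)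
  rw [smul_smul, smul_smul, inv_mul_cancel₀ hl.ne', one_smul, one_smul] at h
  calc (l : EReal) * ETsgn C F₁ F₂ ν₁ ν₂
      ≤ (l : EReal) * (((l⁻¹ : ℝ) : EReal) * ETsgn C F₁ F₂ (l • ν₁) (l • ν₂)) :=
        mul_le_mul_of_nonneg_left h (by exact_mod_cast hl.le)
    _ = ETsgn C F₁ F₂ (l • ν₁) (l • ν₂) := by
        rw [← mul_assoc, ← EReal.coe_mul, mul_inv_cancel₀ hl.ne', EReal.coe_one, one_mul]

lemma ETsgn_add {C : X₁ → ProbabilityMeasure X₂ → EReal}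
    (hClsc : LowerSemicontinuous fun q : X₁ × ProbabilityMeasure X₂ => C q.1 q.2)
    {k : ℝ} (hk : 0 ≤ k) (hCb : ∀ x p, ((-k : ℝ) : EReal) ≤ C x p)
    (hCconv : ∀ (x : X₁) (p q m : ProbabilityMeasure X₂) (t : ℝ), 0 ≤ t → t ≤ 1 →
      (m : Measure X₂) = ENNReal.ofReal t • (p : Measure X₂)
          + ENNReal.ofReal (1 - t) • (q : Measure X₂) →
      C x m ≤ (t : EReal) * C x p + ((1 - t : ℝ) : EReal) * C x q)
    (F₁ F₂ : EntropyFn) (hF₁ : F₁.Superlinear) (hF₂ : F₂.Superlinear)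
    (ν₁ ν₁' : SignedMeasure X₁) (ν₂ ν₂' : SignedMeasure X₂) :
    ETsgn C F₁ F₂ (ν₁ + ν₁') (ν₂ + ν₂') ≤ ETsgn C F₁ F₂ ν₁ ν₂ + ETsgn C F₁ F₂ ν₁' ν₂' := by
  have hb := ETsgn_ne_bot hClsc hk hCb F₁ F₂ hF₁ ν₁ ν₂
  have hb' := ETsgn_ne_bot hClsc hk hCb F₁ F₂ hF₁ ν₁' ν₂'
  rcases ETsgn_cases C F₁ F₂ ν₁ ν₂ with h | ⟨μ₁, h₁, μ₂, h₂, rfl, rfl⟩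
  · rw [h, EReal.top_add_of_ne_bot hb']
    exact le_top
  rcases ETsgn_cases C F₁ F₂ ν₁' ν₂' with h | ⟨μ₁', h₁', μ₂', h₂', rfl, rfl⟩
  · rw [h, EReal.add_top_of_ne_bot hb]
    exact le_top
  rw [← Measure.toSignedMeasure_add, ← Measure.toSignedMeasure_add, ETsgn_coe]
  rw [ETsgn_coe] at hb hb' ⊢
  rw [ETsgn_coe]
  apply EReal.le_add_of_forall_gt (Or.inl hb) (Or.inr hb')
  intro a ha a' ha'
  obtain ⟨_, ⟨γ, hγ, rfl⟩, hlt⟩ := sInf_lt_iff.1 ha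
  obtain ⟨_, ⟨γ', hγ', rfl⟩, hlt'⟩ := sInf_lt_iff.1 ha'
  have h0 : wOpt C F₁ F₂ (μ₁ + μ₁') (μ₂ + μ₂')
      ≤ wCost C F₁ F₂ (μ₁ + μ₁') (μ₂ + μ₂') (γ + γ') inferInstance :=
    sInf_le ⟨γ + γ', inferInstance, rfl⟩
  refine h0.trans ?_
  exact (wCost_add hClsc hk hCb hCconv F₁ F₂ hF₁ hF₂ μ₁ μ₁' μ₂ μ₂' γ γ' hγ hγ').trans
    (add_le_add hlt.le hlt'.le)

end MN

end Helpers

theorem stmt11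
    {X₁ : Type*} [MetricSpace X₁] [PolishSpace X₁] [MeasurableSpace X₁] [BorelSpace X₁]
    {X₂ : Type*} [MetricSpace X₂] [PolishSpace X₂] [MeasurableSpace X₂] [BorelSpace X₂]
    [Nonempty X₂]
    (C : X₁ → ProbabilityMeasure X₂ → EReal)
    (hClsc : LowerSemicontinuous fun q : X₁ × ProbabilityMeasure X₂ => C q.1 q.2)
    (hCbdd : ∃ K : ℝ, ∀ x p, (K : EReal) ≤ C x p)
    (hCconv : ∀ (x : X₁) (p q m : ProbabilityMeasure X₂) (t : ℝ), 0 ≤ t → t ≤ 1 →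
      (m : Measure X₂) = ENNReal.ofReal t • (p : Measure X₂)
          + ENNReal.ofReal (1 - t) • (q : Measure X₂) →
      C x m ≤ (t : EReal) * C x p + ((1 - t : ℝ) : EReal) * C x q)
    (F₁ F₂ : EntropyFn) (hF₁ : F₁.Superlinear) (hF₂ : F₂.Superlinear) :
    (∀ (ν₁ : SignedMeasure X₁) (ν₂ : SignedMeasure X₂), ETsgn C F₁ F₂ ν₁ ν₂ ≠ ⊥) ∧
    (∀ (l : ℝ), 0 ≤ l → ∀ (ν₁ : SignedMeasure X₁) (ν₂ : SignedMeasure X₂),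
        ETsgn C F₁ F₂ (l • ν₁) (l • ν₂) = ((l : ℝ) : EReal) * ETsgn C F₁ F₂ ν₁ ν₂) ∧
    (∀ (ν₁ ν₁' : SignedMeasure X₁) (ν₂ ν₂' : SignedMeasure X₂) (t : ℝ), 0 ≤ t → t ≤ 1 →
        ETsgn C F₁ F₂ (t • ν₁ + (1 - t) • ν₁') (t • ν₂ + (1 - t) • ν₂')
          ≤ ((t : ℝ) : EReal) * ETsgn C F₁ F₂ ν₁ ν₂
            + ((1 - t : ℝ) : EReal) * ETsgn C F₁ F₂ ν₁' ν₂') := by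
  obtain ⟨K, hK⟩ := hCbdd
  have hk : 0 ≤ |K| := abs_nonneg K
  have hCb : ∀ x p, ((-|K| : ℝ) : EReal) ≤ C x p := fun x p =>
    le_trans (by exact_mod_cast neg_abs_le K) (hK x p)
  refine ⟨fun ν₁ ν₂ => ETsgn_ne_bot hClsc hk hCb F₁ F₂ hF₁ ν₁ ν₂,
    fun l hl ν₁ ν₂ => ETsgn_smul hClsc hk hCb F₁ F₂ hF₁ hF₂ ν₁ ν₂ l hl,
    fun ν₁ ν₁' ν₂ ν₂' t ht0 ht1 => ?_⟩
  rw [← ETsgn_smul hClsc hk hCb F₁ F₂ hF₁ hF₂ ν₁ ν₂ t ht0,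
    ← ETsgn_smul hClsc hk hCb F₁ F₂ hF₁ hF₂ ν₁' ν₂' (1 - t) (by linarith)]
  exact ETsgn_add hClsc hk hCb hCconv F₁ F₂ hF₁ hF₂ _ _ _ _
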